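/- arXiv:1210.4127 — 2 statements merged into one kernel-verified Lean document; each statement's English description precedes it below -/
import Mathlib

section
/- Let K be a number field, γ ∈ K, and define t₁(x) = x + γ and tᵢ(x) = (tᵢ₋₁(x) - γ)² + x + γ for i ≥ 2. If for some n ≥ 1 and m ∈ K, the polynomial gⁿ_{γ,m}(x) is irreducible over K and g^{n+1}_{γ,m}(x) is reducible over K, then t_{n+1}(m) is a square in K. -/
open Polynomial

noncomputable def gIter {K : Type*} [Field K] (g : K[X]) : ℕ → K[X]
  | 0 => Polynomial.X
  | n + 1 => g.comp (gIter g n)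

/-- `tpoly γ i` is the polynomial `t_{i+1}` of the paper: `t₁(x) = x + γ`,
`tᵢ(x) = (tᵢ₋₁(x) - γ)² + x + γ`. -/
noncomputable def tpoly {K : Type*} [Field K] (γ : K) : ℕ → K[X]
  | 0 => Polynomial.X + Polynomial.C γ
  | i + 1 => (tpoly γ i - Polynomial.C γ) ^ 2 + Polynomial.X + Polynomial.C γ

/-!
Let `θ` be a root of a monic irreducible `f` of degree `d`. By Capelli's lemma, if
`f((x - a)ᵖ + c)` is reducible over `K`, then `(x - a)ᵖ - (θ - c)` is reducible over `K(θ)`. For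
prime `p` this makes `θ - c` a `p`-th power, and so is its norm `(-1)ᵈ f(c)` in `K`. Apply this with
`p = 2` to `gⁿ⁺¹ = gⁿ ∘ g`: the degree of `gⁿ` is even, and its value at the critical value `m + γ`
of `g` is `tₙ₊₁(m)`.
-/

theorem monic_X_sub_C_pow_add_C {R : Type*} [CommRing R] (a c : R) {n : ℕ} (hn : n ≠ 0) :
    ((X - C a) ^ n + C c).Monic := by
  simpa using (monic_X_pow_add_C c hn).comp_X_sub_C a

theorem natDegree_X_sub_C_pow_add_C {R : Type*} [CommRing R] [Nontrivial R] (a c : R) (n : ℕ) :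
    ((X - C a) ^ n + C c).natDegree = n := by
  rw [natDegree_add_C, (monic_X_sub_C a).natDegree_pow, natDegree_X_sub_C, mul_one]

theorem norm_gen_sub_algebraMap {R S : Type*} [CommRing R] [CommRing S] [Algebra R S]
    (pb : PowerBasis R S) (c : R) :
    Algebra.norm R (pb.gen - algebraMap R S c) = (-1) ^ pb.dim * (minpoly R pb.gen).eval c := by
  rw [← charpoly_leftMulMatrix pb, Matrix.eval_charpoly, Algebra.norm_eq_matrix_det pb.basis,
    ← neg_sub, map_neg, Matrix.det_neg, Fintype.card_fin, map_sub, AlgHom.commutes]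
  rfl

theorem irreducible_comp_X_sub_C_iff {R : Type*} [CommRing R] {f : R[X]} (a : R) :
    Irreducible (f.comp (X - C a)) ↔ Irreducible f := by
  rw [sub_eq_add_neg, ← C_neg]
  exact MulEquiv.irreducible_iff (taylorEquiv (-a))

section Field

variable {K : Type*} [Field K]

theorem irreducible_comp_X_sub_C_pow_add_C {p : ℕ} (hp : p.Prime) {f : K[X]} (hfm : f.Monic)
    (hf : Irreducible f) (a : K) {c : K} (hc : ∀ b : K, b ^ p ≠ (-1) ^ f.natDegree * f.eval c) :
    Irreducible (f.comp ((X - C a) ^ p + C c)) := by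
  suffices h : Irreducible (f.comp (X ^ p + C c)) by
    simpa [comp_assoc] using (irreducible_comp_X_sub_C_iff a).mpr h
  refine irreducible_comp hfm (monic_X_pow_add_C c hp.ne_zero) hf fun E _ _ θ hθ => ?_
  have hint : IsIntegral K θ := minpoly.ne_zero_iff.mp (hθ ▸ hf.ne_zero)
  let pb := IntermediateField.adjoin.powerBasis hint
  have hmin : minpoly K pb.gen = f := (IntermediateField.minpoly_gen K θ).trans hθ
  have hnorm : Algebra.norm K (pb.gen - algebraMap K _ c) = (-1) ^ f.natDegree * f.eval c := by
    rw [norm_gen_sub_algebraMap, ← pb.natDegree_minpoly, hmin]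
  have hirr : Irreducible (X ^ p - C (pb.gen - algebraMap K _ c)) :=
    X_pow_sub_C_irreducible_of_prime hp fun b hb =>
      hc (Algebra.norm K b) (by rw [← map_pow, hb, hnorm])
  convert hirr using 1
  simp only [Polynomial.map_add, Polynomial.map_pow, map_X, map_C, C_sub]
  exact (sub_sub_eq_add_sub _ _ _).symm

theorem isSquare_eval_of_not_irreducible_comp {f : K[X]} (hfm : f.Monic) (hf : Irreducible f)
    (hd : Even f.natDegree) {a c : K} (hred : ¬ Irreducible (f.comp ((X - C a) ^ 2 + C c))) :
    IsSquare (f.eval c) := by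
  contrapose! hred
  refine irreducible_comp_X_sub_C_pow_add_C Nat.prime_two hfm hf a fun b hb => hred ?_
  rw [hd.neg_one_pow, one_mul] at hb
  exact hb ▸ IsSquare.sq b

theorem gIter_succ_eq_comp (g : K[X]) (n : ℕ) : gIter g (n + 1) = (gIter g n).comp g := by
  induction n with
  | zero => exact comp_X.trans X_comp.symm
  | succ n ih => rw [gIter, ih, ← comp_assoc, ← gIter, ih]

theorem natDegree_gIter (g : K[X]) (n : ℕ) : (gIter g n).natDegree = g.natDegree ^ n := by
  induction n with
  | zero => rw [gIter, natDegree_X, pow_zero]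
  | succ n ih => rw [gIter, natDegree_comp, ih, pow_succ']

theorem monic_gIter {g : K[X]} (hg : g.Monic) (hd : g.natDegree ≠ 0) (n : ℕ) :
    (gIter g n).Monic := by
  induction n with
  | zero => exact monic_X
  | succ n ih => exact hg.comp ih (natDegree_gIter g n ▸ pow_ne_zero n hd)

theorem eval_gIter_eq_eval_tpoly (γ m : K) (n : ℕ) :
    (gIter ((X - C γ) ^ 2 + C (m + γ)) n).eval (m + γ) = (tpoly γ n).eval m := by
  induction n with
  | zero => simp [gIter, tpoly]
  | succ n ih => rw [gIter, eval_comp, ih]; simp [tpoly, add_assoc]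

theorem stmt_7_general {γ m : K} {n : ℕ} (hn : 1 ≤ n) {g : K[X]}
    (hg : g = (X - C γ) ^ 2 + C m + C γ) (hirr : Irreducible (gIter g n))
    (hred : ¬ Irreducible (gIter g (n + 1))) : ∃ y : K, (tpoly γ n).eval m = y ^ 2 := by
  have hg' : g = (X - C γ) ^ 2 + C (m + γ) := by rw [hg, C_add, add_assoc]
  have hdeg : g.natDegree = 2 := hg' ▸ natDegree_X_sub_C_pow_add_C γ (m + γ) 2
  have hmonic : g.Monic := hg' ▸ monic_X_sub_C_pow_add_C γ (m + γ) two_ne_zero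
  have heven : Even (gIter g n).natDegree := by
    rw [natDegree_gIter, hdeg]
    exact even_two.pow_of_ne_zero (Nat.one_le_iff_ne_zero.mp hn)
  have hcomp : gIter g (n + 1) = (gIter g n).comp ((X - C γ) ^ 2 + C (m + γ)) := by
    rw [gIter_succ_eq_comp, ← hg']
  have hsq : IsSquare ((gIter g n).eval (m + γ)) :=
    isSquare_eval_of_not_irreducible_comp (monic_gIter hmonic (hdeg ▸ two_ne_zero) n) hirr heven
      (hcomp ▸ hred)
  rwa [hg', eval_gIter_eq_eval_tpoly, isSquare_iff_exists_sq] at hsq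

end Field

theorem stmt_7 (K : Type*) [Field K] [NumberField K] (γ m : K) (n : ℕ) (hn : 1 ≤ n)
    (g : K[X]) (hg : g = (X - C γ) ^ 2 + C m + C γ)
    (hirr : Irreducible (gIter g n))
    (hred : ¬ Irreducible (gIter g (n + 1))) :
    ∃ y : K, (tpoly γ n).eval m = y ^ 2 :=
  stmt_7_general hn hg hirr hred
end

section
/- Let γ ∈ ℤ and tᵢ(x) ∈ ℚ[x] defined by t₁(x) = x + γ, tᵢ(x) = (tᵢ₋₁(x) - γ)² + x + γ. Then every root of tᵢ'(x) in an algebraic closure of ℚ₂ has negative 2-adic valuation; specifically, for i ≥ 2 and each r with 0 ≤ r ≤ i-2, tᵢ'(x) has exactly 2^r roots of 2-adic valuation -1/2^r. -/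
open Polynomial

open scoped Classical

/-!
Write `|·|` for a valuation with `|2| < 1`, and put `sₙ = tpoly c n - c` and `dₙ = (tpoly c n)'`, so
that `sₙ₊₁ = sₙ² + x` and `dₙ₊₁ = 2 sₙ dₙ + 1`. As long as `|2 sₘ(x)| < 1` we have `|dₘ₊₁(x)| = 1`;
once `|2 sₘ(x)| > 1`, the factors `2 sₘ(x)` accumulate. Since `|sₘ(x)| = |x| ^ 2ᵐ` for `|x| > 1`, on
the annulus `|2|⁻¹ < |x| ^ 2ʳ < |2|⁻²` this gives `|dₙ(x)| = |2| ^ (n - r) * |x| ^ (2ⁿ - 2ʳ)` when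
`r ≤ n`. The exponent of `|x|` counts the roots of `dₙ` inside the annulus, and comparing the annuli
for `r` and `r + 1` leaves `2ʳ⁺¹ - 2ʳ = 2ʳ` roots between them, all with `|2 * α ^ 2ʳ| = 1`.
-/

section ValuedField

variable {K Γ₀ : Type*} [Field K] [LinearOrderedCommGroupWithZero Γ₀] (v : Valuation K Γ₀)

theorem valuation_eval_eq_div_pow_card_mul {p : K[X]} (hp : p.Splits) {x y : K} (hx : x ≠ 0)
    (hxy : v x ≤ v y) (hroots : ∀ α ∈ p.roots, v α < v x ∨ v y < v α) :
    v (p.eval y) = (v y / v x) ^ (p.roots.filter (v · < v x)).card * v (p.eval x) := by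
  rw [hp.eval_eq_prod_roots, hp.eval_eq_prod_roots, map_mul, map_mul, mul_left_comm]
  congr 1
  generalize p.roots = s at hroots
  induction s using Multiset.induction_on with
  | empty => simp
  | cons α s ih =>
    have ih := ih fun β hβ => hroots β (Multiset.mem_cons_of_mem hβ)
    simp only [Multiset.map_cons, Multiset.prod_cons, map_mul, ih]
    rcases hroots α (Multiset.mem_cons_self α s) with hα | hα
    · rw [v.map_sub_eq_of_lt_left hα, v.map_sub_eq_of_lt_left (hα.trans_le hxy),
        Multiset.filter_cons_of_pos (p := (v · < v x)) _ hα, Multiset.card_cons, pow_succ]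
      field_simp [v.ne_zero_iff.mpr hx]
    · rw [v.map_sub_eq_of_lt_right hα, v.map_sub_eq_of_lt_right (hxy.trans_lt hα),
        Multiset.filter_cons_of_neg (p := (v · < v x)) _ (hxy.trans hα.le).not_gt, mul_left_comm]

theorem card_roots_filter_valuation_lt {p : K[X]} (hp : p.Splits) {x y : K} (hx : x ≠ 0)
    (hxy : v x < v y) (hroots : ∀ α ∈ p.roots, v α < v x ∨ v y < v α) {a : Γ₀} (ha : a ≠ 0) {k : ℕ}
    (hpx : v (p.eval x) = a * v x ^ k) (hpy : v (p.eval y) = a * v y ^ k) :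
    (p.roots.filter (v · < v x)).card = k := by
  have hvx : 0 < v x := v.pos_iff.mpr hx
  have hratio : 1 < v y / v x := (one_lt_div₀ hvx).mpr hxy
  have heval := valuation_eval_eq_div_pow_card_mul v hp hx hxy.le hroots
  rw [hpx, hpy] at heval
  have hmonomial : a * v y ^ k = (v y / v x) ^ k * (a * v x ^ k) := by
    rw [mul_left_comm, div_pow, div_mul_cancel₀ _ (pow_ne_zero k hvx.ne')]
  have hpx_ne : a * v x ^ k ≠ 0 := mul_ne_zero ha (pow_ne_zero k hvx.ne')
  exact pow_right_injective₀ (zero_lt_one.trans hratio) hratio.ne'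
    (mul_right_cancel₀ hpx_ne (heval.symm.trans hmonomial))

/-- The points `x` with `|a|⁻¹ < |x| ^ m < |a|⁻²`, where `|·|` is the absolute value `v`. The
inequalities are stated without inverses, which makes the annulus empty for `a = 0`. -/
def annulus (a : K) (m : ℕ) : Set K := {x | 1 < v (a * x ^ m) ∧ v (a ^ 2 * x ^ m) < 1}

variable {v}

theorem valuation_mul_pow_lt_iff {a : K} (ha : a ≠ 0) {m : ℕ} (hm : m ≠ 0) {x y : K} :
    v (a * x ^ m) < v (a * y ^ m) ↔ v x < v y := by
  simp only [map_mul, map_pow]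
  rw [mul_lt_mul_iff_right₀ (v.pos_iff.mpr ha), pow_lt_pow_iff_left₀ zero_le zero_le hm]

theorem ne_zero_of_mem_annulus {a : K} {m : ℕ} (hm : m ≠ 0) {x : K} (hx : x ∈ annulus v a m) :
    x ≠ 0 := by
  rintro rfl
  simpa [hm] using hx.1

theorem one_lt_valuation_of_mem_annulus {a : K} (ha : v a < 1) {m : ℕ} {x : K}
    (hx : x ∈ annulus v a m) : 1 < v x := by
  by_contra! hvx
  refine hx.1.not_ge ?_
  rw [map_mul, map_pow]
  exact mul_le_one' ha.le (pow_le_one' hvx m)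

theorem mem_annulus_of_le_of_le {a : K} {m : ℕ} {x y z : K} (hx : x ∈ annulus v a m)
    (hy : y ∈ annulus v a m) (hxz : v x ≤ v z) (hzy : v z ≤ v y) : z ∈ annulus v a m := by
  refine ⟨hx.1.trans_le ?_, hy.2.trans_le' ?_⟩ <;>
  · simp only [map_mul, map_pow]
    gcongr

theorem exists_valuation_lt_mem_annulus [IsAlgClosed K] {a : K} (ha : a ≠ 0) (hva : v a < 1)
    {m : ℕ} (hm : m ≠ 0) : ∃ x ∈ annulus v a m, ∃ y ∈ annulus v a m, v x < v y := by
  obtain ⟨b, hb⟩ := IsAlgClosed.exists_pow_nat_eq a three_pos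
  have hb0 : b ≠ 0 := by
    rintro rfl
    exact ha (by simpa using hb.symm)
  have hvb : v b < 1 := by
    rwa [← hb, map_pow, pow_lt_one_iff_of_nonneg zero_le three_ne_zero] at hva
  have hvb' : 1 < v b⁻¹ := by
    rw [map_inv₀]
    exact (one_lt_inv₀ (v.pos_iff.mpr hb0)).mpr hvb
  obtain ⟨x, hx⟩ := IsAlgClosed.exists_pow_nat_eq (b⁻¹ ^ 4) (Nat.pos_of_ne_zero hm)
  obtain ⟨y, hy⟩ := IsAlgClosed.exists_pow_nat_eq (b⁻¹ ^ 5) (Nat.pos_of_ne_zero hm)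
  have hax : a * x ^ m = b⁻¹ := by rw [hx, ← hb]; field_simp
  have hay : a * y ^ m = b⁻¹ ^ 2 := by rw [hy, ← hb]; field_simp
  have hax' : a ^ 2 * x ^ m = b ^ 2 := by rw [hx, ← hb]; field_simp
  have hay' : a ^ 2 * y ^ m = b := by rw [hy, ← hb]; field_simp
  refine ⟨x, ⟨?_, ?_⟩, y, ⟨?_, ?_⟩, ?_⟩
  · rwa [hax]
  · rw [hax', map_pow]
    exact pow_lt_one₀ zero_le hvb two_ne_zero
  · rw [hay, map_pow]
    exact one_lt_pow₀ hvb' two_ne_zero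
  · rwa [hay']
  · rw [← valuation_mul_pow_lt_iff ha hm, hax, hay, map_pow]
    exact lt_self_pow₀ hvb' one_lt_two

end ValuedField

section TPoly

theorem map_tpoly {K L : Type*} [Field K] [Field L] (φ : K →+* L) (c : K) (n : ℕ) :
    (tpoly c n).map φ = tpoly (φ c) n := by
  induction n with
  | zero => simp [tpoly]
  | succ n ih => simp [tpoly, ih]

variable {K : Type*} [Field K] (c : K)

theorem eval_tpoly_zero_sub (x : K) : (tpoly c 0).eval x - c = x := by
  simp [tpoly]

theorem eval_tpoly_succ_sub (n : ℕ) (x : K) :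
    (tpoly c (n + 1)).eval x - c = ((tpoly c n).eval x - c) ^ 2 + x := by
  simp [tpoly]

theorem eval_derivative_tpoly_zero (x : K) : (tpoly c 0).derivative.eval x = 1 := by
  simp [tpoly]

theorem eval_derivative_tpoly_succ (n : ℕ) (x : K) :
    (tpoly c (n + 1)).derivative.eval x =
      2 * ((tpoly c n).eval x - c) * (tpoly c n).derivative.eval x + 1 := by
  simp [tpoly, derivative_pow]

variable {Γ₀ : Type*} [LinearOrderedCommGroupWithZero Γ₀] {v : Valuation K Γ₀}

theorem valuation_eval_tpoly_sub_le_one {x : K} (hx : v x ≤ 1) (n : ℕ) :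
    v ((tpoly c n).eval x - c) ≤ 1 := by
  induction n with
  | zero => rwa [eval_tpoly_zero_sub]
  | succ n ih =>
    rw [eval_tpoly_succ_sub]
    refine v.map_add_le ?_ hx
    rw [map_pow]
    exact pow_le_one' ih 2

theorem valuation_eval_tpoly_sub {x : K} (hx : 1 < v x) (n : ℕ) :
    v ((tpoly c n).eval x - c) = v x ^ 2 ^ n := by
  induction n with
  | zero => simp [eval_tpoly_zero_sub]
  | succ n ih =>
    have hsq : v (((tpoly c n).eval x - c) ^ 2) = v x ^ 2 ^ (n + 1) := by
      rw [map_pow, ih, ← pow_mul, pow_succ]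
    rw [eval_tpoly_succ_sub, ← hsq]
    apply v.map_add_eq_of_lt_left
    rw [hsq]
    exact lt_self_pow₀ hx (Nat.one_lt_two_pow n.succ_ne_zero)

theorem valuation_eval_derivative_tpoly_eq_one {x : K} {n : ℕ}
    (h : ∀ m < n, v (2 * ((tpoly c m).eval x - c)) < 1) :
    v ((tpoly c n).derivative.eval x) = 1 := by
  induction n with
  | zero => simp [eval_derivative_tpoly_zero]
  | succ n ih =>
    rw [eval_derivative_tpoly_succ, add_comm]
    apply v.map_one_add_of_lt
    rw [map_mul, ih fun m hm => h m (hm.trans n.lt_succ_self), mul_one]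
    exact h n n.lt_succ_self

theorem valuation_eval_derivative_tpoly_eq_prod {x : K} {r : ℕ}
    (hlt : ∀ m < r, v (2 * ((tpoly c m).eval x - c)) < 1)
    (hgt : ∀ m ≥ r, 1 < v (2 * ((tpoly c m).eval x - c))) {n : ℕ} (hn : r ≤ n) :
    v ((tpoly c n).derivative.eval x) =
      ∏ m ∈ Finset.Ico r n, v (2 * ((tpoly c m).eval x - c)) := by
  induction n, hn using Nat.le_induction with
  | base => simpa using valuation_eval_derivative_tpoly_eq_one c hlt
  | succ n hn ih =>
    have hprod : v (2 * ((tpoly c n).eval x - c) * (tpoly c n).derivative.eval x) =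
        ∏ m ∈ Finset.Ico r (n + 1), v (2 * ((tpoly c m).eval x - c)) := by
      rw [map_mul, ih, Finset.prod_Ico_succ_top hn, mul_comm]
    rw [eval_derivative_tpoly_succ, ← hprod]
    apply v.map_add_eq_of_lt_left
    have hone_le : 1 ≤ v ((tpoly c n).derivative.eval x) := by
      rw [ih]
      exact Finset.one_le_prod' fun m hm => (hgt m (Finset.mem_Ico.mp hm).1).le
    rw [map_one, map_mul]
    exact one_lt_mul_of_lt_of_le' (hgt n hn) hone_le

theorem one_lt_valuation_of_isRoot_derivative_tpoly (hv2 : v 2 < 1) {n : ℕ} {α : K}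
    (hα : (tpoly c n).derivative.IsRoot α) : 1 < v α := by
  by_contra! hle
  have hunit : v ((tpoly c n).derivative.eval α) = 1 := by
    refine valuation_eval_derivative_tpoly_eq_one c fun m _ => ?_
    rw [map_mul]
    exact mul_lt_one_of_lt_of_le hv2 (valuation_eval_tpoly_sub_le_one c hle m)
  rw [hα.eq_zero, map_zero] at hunit
  exact zero_ne_one hunit

theorem valuation_eval_derivative_tpoly_of_mem_annulus (hv2 : v 2 < 1) {r : ℕ} {x : K}
    (hx : x ∈ annulus v 2 (2 ^ r)) {n : ℕ} (hn : r ≤ n) :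
    v ((tpoly c n).derivative.eval x) = v 2 ^ (n - r) * v x ^ (2 ^ n - 2 ^ r) := by
  have hvx : 1 < v x := one_lt_valuation_of_mem_annulus hv2 hx
  have hfactor (m : ℕ) : v (2 * ((tpoly c m).eval x - c)) = v 2 * v x ^ 2 ^ m := by
    rw [map_mul, valuation_eval_tpoly_sub c hvx]
  have hlt : ∀ m < r, v (2 * ((tpoly c m).eval x - c)) < 1 := by
    intro m hm
    rw [hfactor, ← pow_lt_one_iff_of_nonneg zero_le two_ne_zero]
    calc (v 2 * v x ^ 2 ^ m) ^ 2 = v 2 ^ 2 * v x ^ 2 ^ (m + 1) := by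
          rw [mul_pow, ← pow_mul, pow_succ 2 m]
      _ ≤ v 2 ^ 2 * v x ^ 2 ^ r := by
          gcongr
          exacts [hvx.le, one_le_two, hm]
      _ < 1 := by simpa using hx.2
  have hgt : ∀ m ≥ r, 1 < v (2 * ((tpoly c m).eval x - c)) := by
    intro m hm
    calc 1 < v 2 * v x ^ 2 ^ r := by simpa using hx.1
      _ ≤ v 2 * v x ^ 2 ^ m := by
          gcongr
          exacts [hvx.le, one_le_two]
      _ = v (2 * ((tpoly c m).eval x - c)) := (hfactor m).symm
  have hexponent : ∑ m ∈ Finset.Ico r n, 2 ^ m = 2 ^ n - 2 ^ r := by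
    have hgeom := geom_sum_Ico_mul (2 : ℤ) hn
    zify [Nat.pow_le_pow_right two_pos hn]
    linarith
  rw [valuation_eval_derivative_tpoly_eq_prod c hlt hgt hn]
  simp only [hfactor, Finset.prod_mul_distrib, Finset.prod_const, Nat.card_Ico,
    Finset.prod_pow_eq_pow_sum, hexponent]

theorem not_isRoot_derivative_tpoly_of_mem_annulus (h2 : (2 : K) ≠ 0) (hv2 : v 2 < 1) {r n : ℕ}
    (hn : r ≤ n) {x : K} (hx : x ∈ annulus v 2 (2 ^ r)) : ¬ (tpoly c n).derivative.IsRoot x := by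
  intro hroot
  have hval := valuation_eval_derivative_tpoly_of_mem_annulus c hv2 hx hn
  rw [hroot.eq_zero, map_zero] at hval
  have hx0 : x ≠ 0 := ne_zero_of_mem_annulus (pow_ne_zero r two_ne_zero) hx
  exact mul_ne_zero (pow_ne_zero _ (v.ne_zero_iff.mpr h2))
    (pow_ne_zero _ (v.ne_zero_iff.mpr hx0)) hval.symm

theorem card_roots_derivative_tpoly_filter_le [IsAlgClosed K] (h2 : (2 : K) ≠ 0) (hv2 : v 2 < 1)
    {r n : ℕ} (hn : r ≤ n) :
    ((tpoly c n).derivative.roots.filter fun α => v (2 * α ^ 2 ^ r) ≤ 1).card =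
      2 ^ n - 2 ^ r := by
  have hm : 2 ^ r ≠ 0 := pow_ne_zero r two_ne_zero
  obtain ⟨x, hx, y, hy, hxy⟩ := exists_valuation_lt_mem_annulus h2 hv2 hm
  have hnot : ∀ α ∈ (tpoly c n).derivative.roots, α ∉ annulus v 2 (2 ^ r) := fun α hα hmem =>
    not_isRoot_derivative_tpoly_of_mem_annulus c h2 hv2 hn hmem (isRoot_of_mem_roots hα)
  have hsplit : ∀ α ∈ (tpoly c n).derivative.roots, v α < v x ∨ v y < v α := by
    intro α hα
    by_contra! h
    exact hnot α hα (mem_annulus_of_le_of_le hx hy h.1 h.2)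
  have hinside : ∀ α ∈ (tpoly c n).derivative.roots,
      (v (2 * α ^ 2 ^ r) ≤ 1 ↔ v α < v x) := by
    intro α hα
    refine ⟨fun h => (valuation_mul_pow_lt_iff h2 hm).mp (h.trans_lt hx.1), fun h => ?_⟩
    by_contra! hgt
    refine hnot α hα ⟨hgt, hx.2.trans' ?_⟩
    exact (valuation_mul_pow_lt_iff (pow_ne_zero 2 h2) hm).mpr h
  rw [Multiset.filter_congr hinside]
  exact card_roots_filter_valuation_lt v (IsAlgClosed.splits _) (ne_zero_of_mem_annulus hm hx) hxy
    hsplit (pow_ne_zero _ (v.ne_zero_iff.mpr h2))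
    (valuation_eval_derivative_tpoly_of_mem_annulus c hv2 hx hn)
    (valuation_eval_derivative_tpoly_of_mem_annulus c hv2 hy hn)

theorem valuation_two_mul_root_pow_lt_one_iff (h2 : (2 : K) ≠ 0) (hv2 : v 2 < 1) {r n : ℕ}
    (hn : r < n) {α : K} (hα : (tpoly c n).derivative.IsRoot α) :
    v (2 * α ^ 2 ^ r) < 1 ↔ v (2 * α ^ 2 ^ (r + 1)) ≤ 1 := by
  have hsq : v (2 ^ 2 * α ^ 2 ^ (r + 1)) = v (2 * α ^ 2 ^ r) ^ 2 := by
    rw [← map_pow, mul_pow, ← pow_mul, pow_succ 2 r]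
  rw [← pow_lt_one_iff_of_nonneg zero_le two_ne_zero, ← hsq]
  constructor
  · intro hlt
    by_contra! hgt
    exact not_isRoot_derivative_tpoly_of_mem_annulus c h2 hv2 hn ⟨hgt, hlt⟩ hα
  · intro hle
    rw [sq, mul_assoc, map_mul]
    exact mul_lt_one_of_lt_of_le hv2 hle

theorem card_roots_derivative_tpoly_filter_eq [IsAlgClosed K] (h2 : (2 : K) ≠ 0) (hv2 : v 2 < 1)
    {r n : ℕ} (hn : r < n) :
    ((tpoly c n).derivative.roots.filter fun α => v (2 * α ^ 2 ^ r) = 1).card = 2 ^ r := by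
  set s := (tpoly c n).derivative.roots
  have hsum : (s.filter fun α => v (2 * α ^ 2 ^ r) ≤ 1) =
      (s.filter fun α => v (2 * α ^ 2 ^ r) = 1) +
        s.filter fun α => v (2 * α ^ 2 ^ (r + 1)) ≤ 1 := by
    have hlt : ∀ α ∈ s, (v (2 * α ^ 2 ^ r) < 1 ↔ v (2 * α ^ 2 ^ (r + 1)) ≤ 1) := fun α hα =>
      valuation_two_mul_root_pow_lt_one_iff c h2 hv2 hn (isRoot_of_mem_roots hα)
    have hempty : ∀ α ∈ s, ¬ (v (2 * α ^ 2 ^ r) = 1 ∧ v (2 * α ^ 2 ^ r) < 1) :=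
      fun _ _ h => h.2.ne h.1
    rw [← Multiset.filter_congr hlt, Multiset.filter_add_filter,
      Multiset.filter_eq_nil.mpr hempty, add_zero]
    exact Multiset.filter_congr fun _ _ => le_iff_eq_or_lt
  have hcard := congrArg Multiset.card hsum
  rw [Multiset.card_add, card_roots_derivative_tpoly_filter_le c h2 hv2 hn.le,
    card_roots_derivative_tpoly_filter_le c h2 hv2 hn] at hcard
  have hpow : 2 ^ (r + 1) ≤ 2 ^ n := Nat.pow_le_pow_right two_pos hn
  rw [pow_succ] at hcard hpow
  omega

end TPoly

section RatValuation

variable {K : Type*} [Field K] (v : K → ℚ)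
  (hmul : ∀ x y : K, x ≠ 0 → y ≠ 0 → v (x * y) = v x + v y)
  (hadd : ∀ x y : K, x ≠ 0 → y ≠ 0 → x + y ≠ 0 → min (v x) (v y) ≤ v (x + y))
  (hone : v 1 = 0)

/-- The multiplicative valuation `x ↦ exp (-v x)` of a rational additive valuation `v`, whose value
`v 0` carries no information and is replaced by the formal value `∞`. -/
noncomputable def ratValuation : Valuation K (WithZero (Multiplicative ℚ)) where
  toFun x := if x = 0 then 0 else WithZero.exp (-v x)
  map_zero' := if_pos rfl
  map_one' := by simp [hone]
  map_mul' x y := by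
    by_cases hx : x = 0
    · simp [hx]
    by_cases hy : y = 0
    · simp [hy]
    simp only [mul_eq_zero, hx, hy, or_self, if_false, hmul x y hx hy, neg_add, WithZero.exp_add]
  map_add_le_max' x y := by
    by_cases hx : x = 0
    · simp [hx]
    by_cases hy : y = 0
    · simp [hy]
    by_cases hxy : x + y = 0
    · simp [hxy]
    simp only [hx, hy, hxy, if_false, le_max_iff, WithZero.exp_le_exp, neg_le_neg_iff]
    exact min_le_iff.mp (hadd x y hx hy hxy)

variable {v}

theorem ratValuation_apply {x : K} (hx : x ≠ 0) :
    ratValuation v hmul hadd hone x = WithZero.exp (-v x) :=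
  if_neg hx

theorem ratValuation_lt_one_iff {x : K} (hx : x ≠ 0) :
    ratValuation v hmul hadd hone x < 1 ↔ 0 < v x := by
  rw [ratValuation_apply hmul hadd hone hx, ← WithZero.exp_zero, WithZero.exp_lt_exp,
    neg_lt_zero]

theorem one_lt_ratValuation_iff {x : K} (hx : x ≠ 0) :
    1 < ratValuation v hmul hadd hone x ↔ v x < 0 := by
  rw [ratValuation_apply hmul hadd hone hx, ← WithZero.exp_zero, WithZero.exp_lt_exp, neg_pos]

theorem ratValuation_mul_pow_eq_one_iff {a x : K} (ha : a ≠ 0) (hx : x ≠ 0) {m : ℕ} (hm : m ≠ 0) :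
    ratValuation v hmul hadd hone (a * x ^ m) = 1 ↔ v x = -(v a / m) := by
  have hm' : (m : ℚ) ≠ 0 := Nat.cast_ne_zero.mpr hm
  rw [map_mul, map_pow, ratValuation_apply hmul hadd hone ha,
    ratValuation_apply hmul hadd hone hx, ← WithZero.exp_nsmul, ← WithZero.exp_add,
    WithZero.exp_eq_one, nsmul_eq_mul, ← neg_div, eq_div_iff hm']
  constructor <;> intro h <;> linarith

end RatValuation

/-- In an arbitrary value group, `v (2 * α ^ 2 ^ r) = 1` expresses that the additive valuation of
`α`, normalized by `2 ↦ 1`, is `-1 / 2 ^ r`. -/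
theorem stmt_13_general {L Γ₀ : Type*} [Field L] [IsAlgClosed L] [LinearOrderedCommGroupWithZero Γ₀]
    (v : Valuation L Γ₀) (h2 : (2 : L) ≠ 0) (hv2 : v 2 < 1) (c : L) (n : ℕ) :
    (∀ α : L, (tpoly c n).derivative.IsRoot α → 1 < v α) ∧
    ∀ r < n,
      ((tpoly c n).derivative.roots.filter fun α => v (2 * α ^ 2 ^ r) = 1).card = 2 ^ r :=
  ⟨fun _ hα => one_lt_valuation_of_isRoot_derivative_tpoly c hv2 hα,
    fun _ hr => card_roots_derivative_tpoly_filter_eq c h2 hv2 hr⟩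

/-- Statement 13, phrased for an algebraic closure `L` of `ℚ₂` equipped with the unique
extension `v` of the 2-adic valuation (written additively, normalized by `v 2 = 1`). -/
theorem stmt_13 (γ : ℤ)
    (L : Type*) [Field L] [IsAlgClosed L] [Algebra ℚ_[2] L] [Algebra.IsAlgebraic ℚ_[2] L]
    (v : L → ℚ)
    (hvmul : ∀ x y : L, x ≠ 0 → y ≠ 0 → v (x * y) = v x + v y)
    (hvadd : ∀ x y : L, x ≠ 0 → y ≠ 0 → x + y ≠ 0 → min (v x) (v y) ≤ v (x + y))
    (hv2 : v (2 : L) = 1) (hvone : v (1 : L) = 0)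
    (i : ℕ) (hi : 1 ≤ i) :
    (∀ α : L,
        ((tpoly (γ : ℚ) (i - 1)).derivative.map
          ((algebraMap ℚ_[2] L).comp (algebraMap ℚ ℚ_[2]))).IsRoot α → v α < 0) ∧
    (2 ≤ i → ∀ r : ℕ, r ≤ i - 2 →
      Multiset.card
        ((((tpoly (γ : ℚ) (i - 1)).derivative.map
            ((algebraMap ℚ_[2] L).comp (algebraMap ℚ ℚ_[2]))).roots).filter
          (fun α => v α = -(1 / 2 ^ r : ℚ))) = 2 ^ r) := by
  have : CharZero L := charZero_of_injective_algebraMap (algebraMap ℚ_[2] L).injective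
  let w := ratValuation v hvmul hvadd hvone
  have hw2 : w 2 < 1 := by
    rw [ratValuation_lt_one_iff hvmul hvadd hvone two_ne_zero, hv2]
    exact zero_lt_one
  rw [← derivative_map, map_tpoly]
  obtain ⟨hroot, hcard⟩ := stmt_13_general w two_ne_zero hw2 _ (i - 1)
  have hne : ∀ α, 1 < w α → α ≠ 0 := fun α hα => w.pos_iff.mp (zero_lt_one.trans hα)
  refine ⟨fun α hα => ?_, fun _ r hr => ?_⟩
  · exact (one_lt_ratValuation_iff hvmul hvadd hvone (hne α (hroot α hα))).mp (hroot α hα)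
  · rw [← hcard r (by omega)]
    refine congrArg _ (Multiset.filter_congr fun α hα => ?_)
    rw [ratValuation_mul_pow_eq_one_iff hvmul hvadd hvone two_ne_zero
      (hne α (hroot α (isRoot_of_mem_roots hα))) (pow_ne_zero r two_ne_zero), hv2, Nat.cast_pow,
      Nat.cast_ofNat]
end
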